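/- Let n ≥ 2 and let A ⊂ ℝⁿ be a Borel set with dim A ≤ 1. Then for σ almost every unit vector e ∈ S^{n-1}, dim P_e(A) = dim A. -/

import Mathlib

/-!
The inequality `dimH (P_e A) ≤ dimH A` holds because `P_e` is Lipschitz. The reverse inequality for
almost every `e` is proved by Kaufman's potential-theoretic argument.

Let `t < dimH A`, so `t < 1`. Frostman's lemma (`exists_compact_subset`, `frostman`) gives a
probability measure `ν` on a compact subset of `A` with `ν (B(x, r)) ≲ r ^ s` for some `s > t`; its
`t`-energy is then finite (`potential_le`). Since `t < 1`, the average of `|v · w| ^ (-t)` over `v` in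
a cube is at most a multiple of `|w| ^ (-t)` (`lintegral_linear_form_le`), so by Fubini the image of
`ν` under `x ↦ v · x` has finite `t`-energy for Lebesgue almost every vector `v`
(`ae_energy_lt_top`). Finite `t`-energy forces dimension at least `t` (`le_dimH_image_of_energy`).
Finally, the exceptional vectors `v` form a Lebesgue null cone, and such a cone meets the sphere in a
set of zero surface measure (`hausdorffMeasure_sphere_inter_cone`).

Frostman's lemma is needed for Borel sets, while the set `A` may have infinite Hausdorff measure in
every dimension below `dimH A`. Compact subsets are therefore produced by a capacitability argument
for the dyadic content, in which every step loses a little of the exponent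
(`content_iUnion_le_of_monotone`); this is harmless, as the exponents may be chosen in the open
interval from `t` to `dimH A`. The same content supplies the capacities of the flow on the dyadic tree
from which the Frostman measure is built. Until the passage to the sphere everything takes place in
`Fin n → ℝ` with the sup norm, for which balls are cubes.
-/

open MeasureTheory Metric
open scoped ENNReal RealInnerProductSpace

namespace Marstrand

open Set Filter Topology NNReal

variable {n : ℕ}

/-! ### Dyadic content -/

/-- For `i = (m, k)`, the open cube of side `2 * 2⁻ᵐ` centred at `2⁻ᵐ k`. These cubes are enlarged
dyadic cubes; taking them open makes a covering of a set a covering of a neighbourhood of it. -/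
def cube (i : ℕ × (Fin n → ℤ)) : Set (Fin n → ℝ) :=
  {x | ∀ j, |2 ^ i.1 * x j - i.2 j| < 1}

/-- The weight `(2⁻ᵐ)ˢ` of a cube of generation `m` in the `s`-dimensional content. -/
noncomputable def wt (s : ℝ) (i : ℕ × (Fin n → ℤ)) : ℝ≥0∞ := 2 ^ (-(s * i.1))

/-- The `s`-dimensional dyadic Hausdorff content of `E`: the infimum, over all families of cubes
covering `E` and with no restriction on their size, of the total weight. -/
noncomputable def content (s : ℝ) (E : Set (Fin n → ℝ)) : ℝ≥0∞ :=
  ⨅ (S : Set (ℕ × (Fin n → ℤ))) (_ : E ⊆ ⋃ i ∈ S, cube i), ∑' i : S, wt s i.1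

lemma content_le {s : ℝ} {E : Set (Fin n → ℝ)} {S : Set (ℕ × (Fin n → ℤ))}
    (h : E ⊆ ⋃ i ∈ S, cube i) : content s E ≤ ∑' i : S, wt s i.1 :=
  iInf₂_le S h

lemma exists_cover {s : ℝ} {E : Set (Fin n → ℝ)} {c : ℝ≥0∞} (h : content s E < c) :
    ∃ S : Set (ℕ × (Fin n → ℤ)), E ⊆ ⋃ i ∈ S, cube i ∧ ∑' i : S, wt s i.1 < c := by
  simp only [content, iInf_lt_iff] at h
  obtain ⟨S, h1, h2⟩ := h
  exact ⟨S, h1, h2⟩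

lemma content_mono {s : ℝ} {E F : Set (Fin n → ℝ)} (h : E ⊆ F) : content s E ≤ content s F :=
  le_iInf₂ fun _ hS => content_le (h.trans hS)

lemma content_empty {s : ℝ} : content s (∅ : Set (Fin n → ℝ)) = 0 := by
  have := content_le (s := s) (E := (∅ : Set (Fin n → ℝ))) (S := ∅) (by simp)
  simpa using this

lemma content_iUnion_le {s : ℝ} {ι : Type*} [Countable ι] (E : ι → Set (Fin n → ℝ)) :
    content s (⋃ j, E j) ≤ ∑' j, content s (E j) := by
  refine ENNReal.le_of_forall_pos_le_add fun ε hε hfin => ?_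
  obtain ⟨δ, hδ, hsum⟩ := ENNReal.exists_pos_sum_of_countable (ENNReal.coe_pos.2 hε).ne' ι
  have hlt : ∀ j, content s (E j) < content s (E j) + δ j := fun j =>
    ENNReal.lt_add_right (ENNReal.ne_top_of_tsum_ne_top hfin.ne j) (ENNReal.coe_pos.2 (hδ j)).ne'
  choose S hS1 hS2 using fun j => exists_cover (hlt j)
  have hcov : (⋃ j, E j) ⊆ ⋃ i ∈ ⋃ j, S j, cube i := by
    refine iUnion_subset fun j => (hS1 j).trans ?_
    exact biUnion_subset_biUnion_left (subset_iUnion S j)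
  calc content s (⋃ j, E j) ≤ _ := content_le hcov
    _ ≤ ∑' j, ∑' i : S j, wt s i.1 := ENNReal.tsum_iUnion_le_tsum _ _
    _ ≤ ∑' j, (content s (E j) + δ j) := ENNReal.tsum_le_tsum fun j => (hS2 j).le
    _ = ∑' j, content s (E j) + ∑' j, (δ j : ℝ≥0∞) := ENNReal.tsum_add
    _ ≤ _ := by gcongr

lemma wt_anti {s s' : ℝ} (h : s ≤ s') (i : ℕ × (Fin n → ℤ)) : wt s' i ≤ wt s i := by
  unfold wt
  apply ENNReal.rpow_le_rpow_of_exponent_le (by norm_num)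
  have : (0 : ℝ) ≤ i.1 := by positivity
  nlinarith

/-- Only finitely many cubes of generation less than `m` meet a given bounded set. -/
lemma finite_cubes {A : Set (Fin n → ℝ)} (hA : Bornology.IsBounded A) (m : ℕ) :
    {i : ℕ × (Fin n → ℤ) | i.1 < m ∧ (cube i ∩ A).Nonempty}.Finite := by
  obtain ⟨R, hR⟩ := hA.subset_closedBall 0
  obtain ⟨N, hN⟩ := exists_nat_gt (2 ^ m * R + 1)
  refine Set.Finite.subset (s := Set.Iio m ×ˢ Set.Icc (fun _ => -(N : ℤ)) (fun _ => (N : ℤ)))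
    ((Set.finite_Iio m).prod (Set.finite_Icc _ _)) ?_
  rintro ⟨l, k⟩ ⟨hl, x, hx, hxA⟩
  refine ⟨hl, ?_⟩
  have key : ∀ j, |(k j : ℝ)| ≤ N := by
    intro j
    have h1 := hx j
    have h2 : |x j| ≤ R := by
      have := hR hxA
      rw [mem_closedBall_zero_iff] at this
      exact (norm_le_pi_norm x j).trans this
    have h3 : (2:ℝ) ^ l ≤ 2 ^ m := pow_le_pow_right₀ (by norm_num) hl.le
    have h4 : |2 ^ l * x j| ≤ 2 ^ m * R := by
      rw [abs_mul, abs_of_pos (by positivity)]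
      gcongr
    simp only at h1
    have h5 : |(k j : ℝ)| ≤ |2 ^ l * x j| + |2 ^ l * x j - k j| := by
      have := abs_sub (2 ^ l * x j) (2 ^ l * x j - k j)
      simpa using this
    linarith
  constructor <;> intro j <;> have := abs_le.1 (key j)
  · exact_mod_cast this.1
  · exact_mod_cast this.2

/-- Contents pass to increasing unions at the price of an arbitrarily small increase of the exponent.
Near-optimal coverings of the `E k` have, generation by generation, an ultrafilter limit `C`, whose
`s`-weight is still at most `c`. A point missed by `C` lies in a cube of large generation in the
covering of some late `E k`; the gap `s < s'` makes the total `s'`-weight of such cubes as small as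
desired. -/
lemma content_iUnion_le_of_monotone {s s' : ℝ} (hss : s < s') {A : Set (Fin n → ℝ)}
    (hA : Bornology.IsBounded A) {E : ℕ → Set (Fin n → ℝ)} (hmono : Monotone E)
    (hEA : ∀ k, E k ⊆ A) {c : ℝ≥0∞} (hc : ∀ k, content s (E k) ≤ c) :
    content s' (⋃ k, E k) ≤ c := by
  refine le_of_forall_gt fun c' hc' => ?_
  suffices H : ∀ c' : ℝ≥0∞, c' ≠ ⊤ → c < c' → content s' (⋃ k, E k) ≤ c' by
    obtain ⟨d, hd1, hd2⟩ := exists_between hc'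
    exact (H d hd2.ne_top hd1).trans_lt hd2
  clear hc' c'
  intro c' hct hc'
  choose S₀ hS₀ hS₀c using fun k => exists_cover ((hc k).trans_lt hc')
  let S : ℕ → Set (ℕ × (Fin n → ℤ)) := fun k => {i | i ∈ S₀ k ∧ (cube i ∩ A).Nonempty}
  have hS : ∀ k, ∀ x ∈ E k, ∃ i ∈ S k, x ∈ cube i := by
    intro k x hx
    obtain ⟨i, hi, hxi⟩ := mem_iUnion₂.1 (hS₀ k hx)
    exact ⟨i, ⟨hi, x, hxi, hEA k hx⟩, hxi⟩
  have hSc : ∀ k, ∑' i : S k, wt s i.1 ≤ c' := fun k =>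
    (ENNReal.tsum_mono_subtype _ (fun i hi => hi.1)).trans (hS₀c k).le
  -- The limit family `C`; the coverings `S k` agree with it on any finite set of cubes, for `U`-most
  -- `k`.
  let U : Ultrafilter ℕ := hyperfilter ℕ
  let C : Set (ℕ × (Fin n → ℤ)) := {i | ∀ᶠ k in (U : Filter ℕ), i ∈ S k}
  have hagree : ∀ m, ∀ᶠ k in (U : Filter ℕ),
      ∀ i ∈ {i : ℕ × (Fin n → ℤ) | i.1 < m ∧ (cube i ∩ A).Nonempty}, i ∈ S k → i ∈ C := by
    intro m
    rw [Filter.eventually_all_finite (finite_cubes hA m)]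
    intro i _
    by_cases h : i ∈ C
    · exact Eventually.of_forall fun _ _ => h
    · have : ∀ᶠ k in (U : Filter ℕ), ¬ i ∈ S k := Ultrafilter.eventually_not.2 h
      filter_upwards [this] with k hk hk'
      exact absurd hk' hk
  have hCs : ∑' i : C, wt s i.1 ≤ c' := by
    rw [ENNReal.tsum_eq_iSup_sum]
    refine iSup_le fun J => ?_
    have : ∀ᶠ k in (U : Filter ℕ), ∀ i ∈ J, (i : ℕ × (Fin n → ℤ)) ∈ S k := by
      rw [Filter.eventually_all_finset]
      exact fun i _ => i.2
    obtain ⟨k, hk⟩ := this.exists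
    refine le_trans ?_ (hSc k)
    have hmap : ∑ i ∈ J, wt s (i : ℕ × (Fin n → ℤ)) =
        ∑ i ∈ J.map (Function.Embedding.subtype _), wt s i := by
      simp
    rw [hmap, ← Finset.tsum_subtype]
    refine ENNReal.tsum_mono_subtype _ ?_
    intro i hi
    simp only [Finset.mem_coe, Finset.mem_map] at hi
    obtain ⟨a, ha, rfl⟩ := hi
    exact hk a ha
  have hCs' : ∑' i : C, wt s' i.1 ≤ c' :=
    (ENNReal.tsum_le_tsum fun i => wt_anti hss.le _).trans hCs
  have hk : ∀ m, ∃ k, m ≤ k ∧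
      ∀ i ∈ {i : ℕ × (Fin n → ℤ) | i.1 < m ∧ (cube i ∩ A).Nonempty}, i ∈ S k → i ∈ C := by
    intro m
    have h1 : ∀ᶠ k in (U : Filter ℕ), m ≤ k := Nat.hyperfilter_le_atTop (eventually_ge_atTop m)
    exact (h1.and (hagree m)).exists
  choose k hkm hkC using hk
  -- The part of the covering number `k m` made of the cubes of generation at least `m`: the
  -- exponent gap gains a factor `r ^ m` for its total weight.
  let D : ℕ → Set (ℕ × (Fin n → ℤ)) := fun m => {i | i ∈ S (k m) ∧ m ≤ i.1}
  set r : ℝ≥0∞ := 2 ^ (-(s' - s)) with hr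
  have hr1 : r < 1 := by
    rw [hr, ← ENNReal.rpow_zero (x := 2)]
    exact ENNReal.rpow_lt_rpow_of_exponent_lt (by norm_num) (by norm_num) (by linarith)
  have hD : ∀ m, ∑' i : D m, wt s' i.1 ≤ r ^ m * c' := by
    intro m
    calc ∑' i : D m, wt s' i.1 ≤ ∑' i : D m, r ^ m * wt s i.1 := by
          refine ENNReal.tsum_le_tsum fun i => ?_
          have hi : (m : ℝ) ≤ i.1.1 := by exact_mod_cast i.2.2
          rw [hr, ← ENNReal.rpow_natCast, ← ENNReal.rpow_mul, wt, wt,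
            ← ENNReal.rpow_add _ _ (by norm_num) (by norm_num)]
          apply ENNReal.rpow_le_rpow_of_exponent_le (by norm_num)
          nlinarith
      _ = r ^ m * ∑' i : D m, wt s i.1 := ENNReal.tsum_mul_left
      _ ≤ r ^ m * c' := by
          gcongr
          exact (ENNReal.tsum_mono_subtype _ (fun i hi => hi.1)).trans (hSc (k m))
  have hfin : ∀ N, content s' (⋃ k, E k) ≤ c' + r ^ N * ((1 - r)⁻¹ * c') := by
    intro N
    have hcov : (⋃ k, E k) ⊆ ⋃ i ∈ C ∪ ⋃ m, D (N + m), cube i := by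
      intro x hx
      obtain ⟨j, hj⟩ := mem_iUnion.1 hx
      obtain ⟨i, hi, hxi⟩ := hS (k (N + j)) x
        (hmono ((Nat.le_add_left j N).trans (hkm (N + j))) hj)
      refine mem_iUnion₂.2 ⟨i, ?_, hxi⟩
      by_cases h : i.1 < N + j
      · exact Or.inl (hkC (N + j) i ⟨h, hi.2⟩ hi)
      · exact Or.inr (mem_iUnion.2 ⟨j, hi, not_lt.1 h⟩)
    calc content s' (⋃ k, E k) ≤ _ := content_le hcov
      _ ≤ ∑' i : C, wt s' i.1 + ∑' i : (⋃ m, D (N + m) : Set (ℕ × (Fin n → ℤ))), wt s' i.1 :=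
          ENNReal.tsum_union_le (wt s') C (⋃ m, D (N + m))
      _ ≤ c' + ∑' m, ∑' i : D (N + m), wt s' i.1 := by
          gcongr
          exact ENNReal.tsum_iUnion_le_tsum (wt s') fun m => D (N + m)
      _ ≤ c' + ∑' m, r ^ N * (r ^ m * c') := by
          refine add_le_add le_rfl (ENNReal.tsum_le_tsum fun m => ?_)
          rw [← mul_assoc, ← pow_add]
          exact hD (N + m)
      _ = _ := by rw [ENNReal.tsum_mul_left, ENNReal.tsum_mul_right, ENNReal.tsum_geometric]
  have hlim : Tendsto (fun N : ℕ => c' + r ^ N * ((1 - r)⁻¹ * c')) atTop (𝓝 (c' + 0)) := by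
    refine tendsto_const_nhds.add ?_
    have h0 : Tendsto (fun N : ℕ => r ^ N) atTop (𝓝 0) :=
      ENNReal.tendsto_pow_atTop_nhds_zero_of_lt_one hr1
    have hne : (1 - r)⁻¹ * c' ≠ ⊤ :=
      ENNReal.mul_ne_top (ENNReal.inv_ne_top.2 (tsub_pos_of_lt hr1).ne') hct
    simpa using ENNReal.Tendsto.mul_const h0 (Or.inr hne)
  rw [add_zero] at hlim
  exact ge_of_tendsto' hlim hfin

lemma cube_isOpen (i : ℕ × (Fin n → ℤ)) : IsOpen (cube i) := by
  have : cube i = ⋂ j, {x : Fin n → ℝ | |2 ^ i.1 * x j - i.2 j| < 1} := by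
    ext; simp [cube]
  rw [this]
  exact isOpen_iInter_of_finite fun j => isOpen_lt (by fun_prop) continuous_const

/-- Inner regularity of contents for analytic sets. Writing `A` as a continuous image of `ℕ → ℕ`,
one bounds the coordinates one after another, keeping the content above a fixed `c > 0`; the
`j`-th step lowers the exponent from `e j` to `e (j + 1)`, where `e` decreases from `s'` to a limit
which is at least `s`. -/
lemma exists_compact_subset {s s' : ℝ} (hss : s < s') {A : Set (Fin n → ℝ)}
    (hA : Bornology.IsBounded A) (hAan : AnalyticSet A) (hpos : 0 < content s' A) :
    ∃ K ⊆ A, IsCompact K ∧ 0 < content s K := by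
  obtain ⟨c, hc0, hc⟩ := exists_between hpos
  rw [AnalyticSet] at hAan
  rcases hAan with rfl | ⟨f, hf, rfl⟩
  · exact ⟨∅, subset_rfl, isCompact_empty, by simp [content_empty] at hpos⟩
  -- Strictly decreasing from `e 0 = s'`, and always at least `s`.
  let e : ℕ → ℝ := fun j => s + (s' - s) / (j + 1)
  have he : ∀ j, s ≤ e j := fun j => by
    have : 0 ≤ (s' - s) / (j + 1) := div_nonneg (by linarith) (by positivity)
    simp only [e]; linarith
  have he' : ∀ j, e (j + 1) < e j := fun j => by
    simp only [e]
    push_cast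
    gcongr
    · linarith
  have step : ∀ (j : ℕ) (Z : Set (ℕ → ℕ)), c < content (e j) (f '' Z) →
      ∃ b : ℕ, c < content (e (j + 1)) (f '' (Z ∩ {z | z j ≤ b})) := by
    intro j Z hZ
    by_contra! hcon
    refine hZ.not_ge ?_
    have hU : f '' Z = ⋃ b : ℕ, f '' (Z ∩ {z | z j ≤ b}) := by
      rw [← image_iUnion, ← inter_iUnion]
      congr 1
      refine (inter_eq_left.2 fun z _ => mem_iUnion.2 ⟨z j, le_refl (z j)⟩).symm
    rw [hU]
    refine content_iUnion_le_of_monotone (he' j) hA ?_ (fun b => image_subset_range _ _) hcon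
    intro b b' hbb
    exact image_mono (inter_subset_inter_right _ fun z hz => le_trans hz hbb)
  let Z : ∀ j : ℕ, {Z : Set (ℕ → ℕ) // c < content (e j) (f '' Z)} := fun j =>
    Nat.rec ⟨univ, by simpa [e] using hc⟩
      (fun j Z => ⟨Z.1 ∩ {z | z j ≤ (step j Z.1 Z.2).choose}, (step j Z.1 Z.2).choose_spec⟩) j
  let b : ℕ → ℕ := fun j => (step j (Z j).1 (Z j).2).choose
  have hZ : ∀ j, (Z j).1 = {z | ∀ i < j, z i ≤ b i} := by
    intro j
    induction j with
    | zero => simp [Z]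
    | succ j ih =>
      have : (Z (j + 1)).1 = (Z j).1 ∩ {z | z j ≤ b j} := rfl
      rw [this, ih]
      ext z
      simp only [mem_inter_iff, mem_ofPred_eq, Nat.lt_succ_iff_lt_or_eq]
      constructor
      · rintro ⟨h1, h2⟩ i (hi | rfl)
        exacts [h1 i hi, h2]
      · exact fun h => ⟨fun i hi => h i (Or.inl hi), h j (Or.inr rfl)⟩
  -- `Kz` is the intersection of the decreasing sets `Z j`. By compactness, an open set containing
  -- the image of `Kz` already contains the image of some `Z j`, whose content exceeds `c`.
  let Kz : Set (ℕ → ℕ) := Set.univ.pi fun i => Set.Iic (b i)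
  have hKz : IsCompact Kz := isCompact_univ_pi fun i => (Set.finite_Iic _).isCompact
  refine ⟨f '' Kz, image_subset_range _ _, hKz.image hf, hc0.trans_le ?_⟩
  refine le_iInf₂ fun S hS => ?_
  set W : Set (Fin n → ℝ) := ⋃ i ∈ S, cube i with hW
  have hWo : IsOpen W := isOpen_biUnion fun i _ => cube_isOpen i
  have hKV : Kz ⊆ f ⁻¹' W := image_subset_iff.1 hS
  have hVo : IsOpen (f ⁻¹' W) := hWo.preimage hf
  obtain ⟨j, hj⟩ : ∃ j, (Z j).1 ⊆ f ⁻¹' W := by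
    by_contra! hcon
    choose z hz hzW using fun j => not_subset.1 (hcon j)
    -- Truncating the coordinates of `z j` puts it in `Kz` without altering its first `j`
    -- coordinates, so a cluster point of the truncations is one of the `z j` as well.
    let y : ℕ → ℕ → ℕ := fun j i => min (z j i) (b i)
    have hy : ∀ j, y j ∈ Kz := fun j i _ => min_le_right (z j i) (b i)
    obtain ⟨y₀, hy₀, φ, hφ, hlim⟩ := hKz.tendsto_subseq hy
    have hzlim : Tendsto (fun l => z (φ l)) atTop (𝓝 y₀) := by
      rw [tendsto_pi_nhds] at hlim ⊢
      intro i
      refine (hlim i).congr' ?_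
      filter_upwards [eventually_gt_atTop i] with l hl
      have := hz (φ l)
      rw [hZ] at this
      exact min_eq_left (this i (hl.trans_le (hφ.id_le l)))
    obtain ⟨l, hl⟩ := (hzlim.eventually (hVo.mem_nhds (hKV hy₀))).exists
    exact hzW (φ l) hl
  calc c ≤ content (e j) (f '' (Z j).1) := (Z j).2.le
    _ ≤ ∑' i : S, wt (e j) i.1 := content_le (image_subset_iff.2 hj)
    _ ≤ _ := ENNReal.tsum_le_tsum fun i => wt_anti (he j) _

lemma ediam_cube_le (i : ℕ × (Fin n → ℤ)) : ediam (cube i) ≤ 2 * 2 ^ (-(i.1 : ℝ)) := by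
  refine ediam_le fun x hx y hy => ?_
  have h2 : (2 * 2 ^ (-(i.1 : ℝ)) : ℝ≥0∞) = ENNReal.ofReal (2 * (2 ^ i.1)⁻¹) := by
    rw [ENNReal.ofReal_mul (by norm_num), ENNReal.ofReal_inv_of_pos (by positivity),
      ENNReal.ofReal_pow (by norm_num), ENNReal.rpow_neg, ENNReal.rpow_natCast]
    simp
  rw [h2, edist_dist]
  apply ENNReal.ofReal_le_ofReal
  rw [dist_pi_le_iff (by positivity)]
  intro j
  have h1 := abs_lt.1 (hx j)
  have h3 := abs_lt.1 (hy j)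
  have hp : (0 : ℝ) < 2 ^ i.1 := by positivity
  rw [Real.dist_eq, ← div_eq_mul_inv, le_div_iff₀ hp]
  nth_rewrite 1 [← abs_of_pos hp]
  rw [← abs_mul, abs_le]
  constructor <;> nlinarith [h1.1, h1.2, h3.1, h3.2]

/-- If coverings have arbitrarily small total weight, each of their cubes is small, so that they are
admissible in the definition of the Hausdorff measure. -/
lemma hausdorffMeasure_eq_zero_of_content_eq_zero {s : ℝ} (hs : 0 < s) {A : Set (Fin n → ℝ)}
    (h : content s A = 0) : μH[s] A = 0 := by
  have hlt : ∀ k : ℕ, content s A < (2 ^ (-(s * k)) : ℝ≥0∞) := fun k => by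
    rw [h]; exact ENNReal.rpow_pos (by norm_num) (by norm_num)
  choose S hS hSc using fun k => exists_cover (hlt k)
  have hq : Tendsto (fun k : ℕ => (2 ^ (-(k : ℝ)) : ℝ≥0∞)) atTop (𝓝 0) := by
    have := ENNReal.tendsto_pow_atTop_nhds_zero_of_lt_one (r := 2⁻¹) (by simp)
    refine this.congr fun k => ?_
    rw [ENNReal.rpow_neg, ENNReal.rpow_natCast, ENNReal.inv_pow]
  have hr : Tendsto (fun k : ℕ => (2 * 2 ^ (-(k : ℝ)) : ℝ≥0∞)) atTop (𝓝 0) := by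
    simpa using ENNReal.Tendsto.const_mul hq (Or.inr (by norm_num : (2 : ℝ≥0∞) ≠ ⊤))
  have hdiam : ∀ k, ∀ i : S k, ediam (cube i.1) ≤ 2 * 2 ^ (-(k : ℝ)) := by
    intro k i
    refine (ediam_cube_le i.1).trans ?_
    have h1 : wt s i.1 ≤ 2 ^ (-(s * k)) := (ENNReal.le_tsum i).trans (hSc k).le
    have h2 : (k : ℝ) ≤ i.1.1 := by
      by_contra! hcon
      refine h1.not_gt ?_
      unfold wt
      apply ENNReal.rpow_lt_rpow_of_exponent_lt (by norm_num) (by norm_num)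
      nlinarith
    gcongr
    norm_num
  have hmain := Measure.hausdorffMeasure_le_liminf_tsum s A (l := atTop)
    (fun k : ℕ => (2 * 2 ^ (-(k : ℝ)) : ℝ≥0∞)) hr (fun k (i : S k) => cube i.1)
    (Eventually.of_forall hdiam)
    (Eventually.of_forall fun k => (hS k).trans (biUnion_eq_iUnion _ _).subset)
  have hbd : ∀ k : ℕ, ∑' i : S k, ediam (cube i.1) ^ s ≤ (2 * 2 ^ (-(k : ℝ))) ^ s := by
    intro k
    calc ∑' i : S k, ediam (cube i.1) ^ s ≤ ∑' i : S k, 2 ^ s * wt s i.1 := by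
          refine ENNReal.tsum_le_tsum fun i => ?_
          refine (ENNReal.rpow_le_rpow (ediam_cube_le i.1) hs.le).trans_eq ?_
          rw [ENNReal.mul_rpow_of_nonneg _ _ hs.le, ← ENNReal.rpow_mul, wt]
          ring_nf
      _ = 2 ^ s * ∑' i : S k, wt s i.1 := ENNReal.tsum_mul_left
      _ ≤ 2 ^ s * 2 ^ (-(s * k)) := by gcongr; exact (hSc k).le
      _ = _ := by
          rw [ENNReal.mul_rpow_of_nonneg _ _ hs.le, ← ENNReal.rpow_mul]
          ring_nf
  have hlim : Tendsto (fun k : ℕ => ((2 * 2 ^ (-(k : ℝ)) : ℝ≥0∞)) ^ s) atTop (𝓝 0) := by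
    have := (ENNReal.continuous_rpow_const (y := s)).tendsto 0
    rw [ENNReal.zero_rpow_of_pos hs] at this
    exact this.comp hr
  refine le_antisymm (hmain.trans ?_) zero_le
  rw [← hlim.liminf_eq]
  exact liminf_le_liminf (Eventually.of_forall hbd)

/-! ### Existence of Frostman measures -/

/-- Let `p` send a node of generation `m + 1` to its parent in generation `m`, and let the
capacities `h` be subadditive along this tree. The mass `h 0` can then be pushed down the tree, each
node sharing what it received among its children in proportion to their capacities, without ever
exceeding the capacities. -/
lemma exists_flow {T : Type*} (p : T → T) (h : ℕ → T → ℝ≥0∞) [DecidableEq T]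
    (hsub : ∀ m k, h m k ≤ ∑' k', if p k' = k then h (m + 1) k' else 0)
    (hfin : ∀ m, ∑' k, h m k ≠ ⊤) :
    ∃ w : ℕ → T → ℝ≥0∞, w 0 = h 0 ∧ (∀ m k, w m k ≤ h m k) ∧
      ∀ m k, (∑' k', if p k' = k then w (m + 1) k' else 0) = w m k := by
  let σ : ℕ → T → ℝ≥0∞ := fun m k => ∑' k', if p k' = k then h (m + 1) k' else 0
  let w : ℕ → T → ℝ≥0∞ := fun m =>
    Nat.rec (h 0) (fun m v k' => v (p k') * (h (m + 1) k' / σ m (p k'))) m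
  have hw : ∀ m k', w (m + 1) k' = w m (p k') * (h (m + 1) k' / σ m (p k')) := fun _ _ => rfl
  have hle : ∀ m k, w m k ≤ h m k := by
    intro m
    induction m with
    | zero => exact fun _ => le_rfl
    | succ m ih =>
      intro k
      have h1 : w m (p k) / σ m (p k) ≤ 1 :=
        ENNReal.div_le_of_le_mul (by simpa using (ih (p k)).trans (hsub m (p k)))
      calc w (m + 1) k = w m (p k) / σ m (p k) * h (m + 1) k := by
            rw [hw, div_eq_mul_inv, div_eq_mul_inv]; ring
        _ ≤ 1 * h (m + 1) k := by gcongr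
        _ = _ := one_mul _
  refine ⟨w, rfl, hle, fun m k => ?_⟩
  have h2 : ∀ k', (if p k' = k then w (m + 1) k' else 0) =
      w m k * (σ m k)⁻¹ * (if p k' = k then h (m + 1) k' else 0) := by
    intro k'
    split_ifs with hk
    · rw [hw, hk, div_eq_mul_inv]; ring
    · simp
  simp_rw [h2]
  rw [ENNReal.tsum_mul_left]
  change w m k * (σ m k)⁻¹ * σ m k = w m k
  by_cases h0 : σ m k = 0
  · have : w m k = 0 := le_antisymm ((hle m k).trans ((hsub m k).trans_eq h0)) zero_le
    simp [this]
  · have htop : σ m k ≠ ⊤ := by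
      refine ne_top_of_le_ne_top (hfin (m + 1)) (ENNReal.tsum_le_tsum fun k' => ?_)
      split_ifs
      exacts [le_rfl, zero_le]
    rw [mul_assoc, ENNReal.inv_mul_cancel h0 htop, mul_one]

/-- The mass that a flow gives to the descendants, `d` generations later, of a set of nodes is the
mass of these nodes; here the set is replaced by a function `g`. -/
lemma tsum_flow {T : Type*} [DecidableEq T] {p : T → T} {w : ℕ → T → ℝ≥0∞}
    (hw : ∀ m k, (∑' k', if p k' = k then w (m + 1) k' else 0) = w m k) (g : T → ℝ≥0∞)
    (m d : ℕ) : ∑' k', w (m + d) k' * g (p^[d] k') = ∑' k, w m k * g k := by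
  induction d with
  | zero => simp
  | succ d ih =>
    rw [← ih, ← add_assoc]
    have h1 : ∀ k, w (m + d) k * g (p^[d] k) =
        ∑' k', if p k' = k then w (m + d + 1) k' * g (p^[d + 1] k') else 0 := by
      intro k
      rw [← hw, ← ENNReal.tsum_mul_right]
      congr 1
      ext k'
      split_ifs with hk
      · rw [Function.iterate_succ_apply, hk]
      · simp
    simp_rw [h1]
    rw [ENNReal.tsum_comm]
    congr 1
    ext k'
    simp

/-- The integer vector indexing the half-open dyadic cube of side `2⁻ᵐ` that contains `x`. -/
noncomputable def code (m : ℕ) (x : Fin n → ℝ) : Fin n → ℤ := fun j => ⌊2 ^ m * x j⌋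

/-- The parent of a dyadic cube is obtained by halving its index. -/
lemma half_code (m : ℕ) (x : Fin n → ℝ) : (fun j => code (m + 1) x j / 2) = code m x := by
  ext j
  have := Int.floor_div_natCast (2 ^ (m + 1) * x j) 2
  simp only [code]
  rw [show (2 : ℤ) = ((2 : ℕ) : ℤ) from rfl, ← this]
  congr 1
  push_cast
  ring

lemma half_iterate_code (m d : ℕ) (x : Fin n → ℝ) :
    (fun (k : Fin n → ℤ) j => k j / 2)^[d] (code (m + d) x) = code m x := by
  induction d with
  | zero => rfl
  | succ d ih => rw [Function.iterate_succ_apply, ← add_assoc, half_code, ih]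

lemma mem_cube_code (m : ℕ) (x : Fin n → ℝ) : x ∈ cube (m, code m x) := by
  intro j
  have h1 := Int.floor_le (2 ^ m * x j)
  have h2 := Int.lt_floor_add_one (2 ^ m * x j)
  simp only [code]
  rw [abs_lt]
  constructor <;> linarith

/-- A ball of radius `2⁻ᵐ` meets at most `3 ^ n` dyadic cubes of side `2⁻ᵐ`. -/
lemma code_mem_Icc {m : ℕ} {x y : Fin n → ℝ} (h : dist y x < (2 ^ m)⁻¹) :
    code m y ∈ Finset.Icc (fun j => code m x j - 1) (fun j => code m x j + 1) := by
  have hj : ∀ j, |2 ^ m * y j - 2 ^ m * x j| < 1 := by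
    intro j
    have h1 := (dist_le_pi_dist y x j).trans_lt h
    rw [Real.dist_eq] at h1
    rw [← mul_sub, abs_mul, abs_of_pos (by positivity : (0 : ℝ) < 2 ^ m)]
    calc 2 ^ m * |y j - x j| < 2 ^ m * (2 ^ m)⁻¹ := by gcongr
      _ = 1 := mul_inv_cancel₀ (by positivity)
  have key : ∀ j, code m x j - 1 ≤ code m y j ∧ code m y j ≤ code m x j + 1 := by
    intro j
    have := abs_lt.1 (hj j)
    simp only [code]
    constructor
    · rw [Int.le_floor]
      push_cast
      linarith [Int.floor_le (2 ^ m * x j)]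
    · rw [← Int.lt_add_one_iff, Int.floor_lt]
      push_cast
      linarith [Int.lt_floor_add_one (2 ^ m * x j)]
  rw [Finset.mem_Icc]
  exact ⟨fun j => (key j).1, fun j => (key j).2⟩

/-- Frostman's lemma. The contents of the dyadic pieces of `K` are capacities on the dyadic tree, and
the flow through them has total mass at least `content s K`. Placing the mass of generation `M` at
points of `K` gives measures which satisfy the ball condition at all scales above `2⁻ᴹ`; the measure
sought is a weak limit of them. -/
lemma frostman {s : ℝ} (hs : 0 < s) {K : Set (Fin n → ℝ)} (hK : IsCompact K)
    (hpos : 0 < content s K) :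
    ∃ ν : Measure (Fin n → ℝ), IsProbabilityMeasure ν ∧ ν Kᶜ = 0 ∧
      ∃ C : ℝ≥0∞, C ≠ ⊤ ∧ ∀ x, ∀ r : ℝ, 0 < r → r ≤ 1 →
        ν (ball x r) ≤ C * ENNReal.ofReal r ^ s := by
  classical
  have hKne : K.Nonempty := by
    by_contra hcon
    rw [not_nonempty_iff_eq_empty.1 hcon, content_empty] at hpos
    exact hpos.false
  let p : (Fin n → ℤ) → (Fin n → ℤ) := fun k j => k j / 2
  let h : ℕ → (Fin n → ℤ) → ℝ≥0∞ := fun m k => content s (K ∩ {x | code m x = k})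
  have hcell : ∀ m k, K ∩ {x | code m x = k} ⊆ cube (m, k) := by
    rintro m k x ⟨_, rfl⟩
    exact mem_cube_code m x
  have hwt : ∀ m k, h m k ≤ 2 ^ (-(s * m)) := by
    intro m k
    refine (content_le (S := {(m, k)}) (by simpa using hcell m k)).trans ?_
    rw [tsum_singleton (m, k) (wt s)]
    exact le_rfl
  have hwt' : ∀ m k, h m k ≠ ⊤ := fun m k =>
    ne_top_of_le_ne_top (by simp) (hwt m k)
  have hne : ∀ m k, h m k ≠ 0 → (K ∩ {x | code m x = k}).Nonempty := by
    intro m k hk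
    by_contra hcon
    exact hk (by simp only [h]; rw [not_nonempty_iff_eq_empty.1 hcon, content_empty])
  have hfin : ∀ m, ∑' k, h m k ≠ ⊤ := by
    intro m
    have hF : {k : Fin n → ℤ | h m k ≠ 0}.Finite := by
      refine ((finite_cubes hK.isBounded (m + 1)).image Prod.snd).subset ?_
      intro k hk
      obtain ⟨x, hx⟩ := hne m k hk
      exact ⟨(m, k), ⟨Nat.lt_succ_self m, x, hcell m k hx, hx.1⟩, rfl⟩
    rw [tsum_eq_sum (s := hF.toFinset) (fun k hk => by simpa using hk)]
    exact ENNReal.sum_ne_top.2 fun k _ => hwt' m k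
  have hsub : ∀ m k, h m k ≤ ∑' k', if p k' = k then h (m + 1) k' else 0 := by
    intro m k
    have hU : K ∩ {x | code m x = k} ⊆
        ⋃ k', if p k' = k then K ∩ {x | code (m + 1) x = k'} else ∅ := by
      rintro x ⟨hxK, hx⟩
      refine mem_iUnion.2 ⟨code (m + 1) x, ?_⟩
      have : p (code (m + 1) x) = k := (half_code m x).trans hx
      rw [if_pos this]
      exact ⟨hxK, rfl⟩
    refine (content_mono hU).trans ((content_iUnion_le _).trans ?_)
    refine ENNReal.tsum_le_tsum fun k' => ?_
    split_ifs
    exacts [le_rfl, content_empty.le]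
  obtain ⟨w, hw0, hwh, hw⟩ := exists_flow p h hsub hfin
  set m₀ : ℝ≥0∞ := ∑' k, h 0 k with hm₀
  have hm₀0 : m₀ ≠ 0 := by
    refine (hpos.trans_le ?_).ne'
    refine le_trans (content_mono ?_) (content_iUnion_le _)
    exact fun x hx => mem_iUnion.2 ⟨code 0 x, hx, rfl⟩
  have hm₀t : m₀ ≠ ⊤ := hfin 0
  have hmass : ∀ M, ∑' k, w M k = m₀ := by
    intro M
    have := tsum_flow hw (fun _ => 1) 0 M
    simpa [hw0] using this
  have hpt : ∀ M k, ∃ x : K, w M k ≠ 0 → code M x.1 = k := by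
    intro M k
    by_cases h0 : w M k = 0
    · exact ⟨⟨_, hKne.some_mem⟩, fun h1 => absurd h0 h1⟩
    · obtain ⟨x, hx⟩ := hne M k (fun h1 => h0 (le_antisymm ((hwh M k).trans_eq h1) zero_le))
      exact ⟨⟨x, hx.1⟩, fun _ => hx.2⟩
  choose pt hpt using hpt
  let μ : ℕ → Measure K := fun M => Measure.sum fun k => w M k • Measure.dirac (pt M k)
  have hμ : ∀ M, μ M univ = m₀ := by
    intro M
    simp [μ, hmass]
  have hball : ∀ (m d : ℕ) (x : Fin n → ℝ),
      μ (m + d) (Subtype.val ⁻¹' ball x (2 ^ m)⁻¹) ≤ 3 ^ n * 2 ^ (-(s * m)) := by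
    intro m d x
    let I : Finset (Fin n → ℤ) :=
      Finset.Icc (fun j => code m x j - 1) (fun j => code m x j + 1)
    have hms : MeasurableSet (Subtype.val ⁻¹' ball x (2 ^ m)⁻¹ : Set K) :=
      measurable_subtype_coe measurableSet_ball
    calc μ (m + d) (Subtype.val ⁻¹' ball x (2 ^ m)⁻¹)
        = ∑' k, w (m + d) k *
            (Subtype.val ⁻¹' ball x (2 ^ m)⁻¹ : Set K).indicator 1 (pt (m + d) k) := by
          simp only [μ]
          rw [Measure.sum_apply _ hms]
          congr 1
          ext k
          rw [Measure.smul_apply, Measure.dirac_apply' _ hms, smul_eq_mul]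
      _ ≤ ∑' k, w (m + d) k * (I : Set (Fin n → ℤ)).indicator 1 (p^[d] k) := by
          refine ENNReal.tsum_le_tsum fun k => ?_
          by_cases h0 : w (m + d) k = 0
          · simp [h0]
          by_cases hb : (pt (m + d) k).1 ∈ ball x (2 ^ m)⁻¹
          · have h1 : p^[d] k ∈ (I : Set (Fin n → ℤ)) := by
              rw [← hpt (m + d) k h0]
              rw [show p^[d] (code (m + d) (pt (m + d) k).1) = code m (pt (m + d) k).1 from
                half_iterate_code m d _]
              exact code_mem_Icc hb
            rw [indicator_of_mem h1, indicator_of_mem (by exact hb)]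
            rfl
          · rw [indicator_of_notMem (by exact hb)]
            simp
      _ = ∑' k, w m k * (I : Set (Fin n → ℤ)).indicator 1 k := tsum_flow hw _ m d
      _ = ∑ k ∈ I, w m k := by
          rw [tsum_eq_sum (s := I)]
          · refine Finset.sum_congr rfl fun k hk => ?_
            rw [indicator_of_mem (by exact hk)]
            simp
          · intro k hk
            rw [indicator_of_notMem (by exact hk)]
            simp
      _ ≤ ∑ k ∈ I, 2 ^ (-(s * m)) := Finset.sum_le_sum fun k _ => (hwh m k).trans (hwt m k)
      _ = _ := by
          rw [Finset.sum_const, nsmul_eq_mul]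
          congr 1
          simp only [I, Pi.card_Icc, Int.card_Icc]
          have : ∀ a : ℤ, (a + 1 + 1 - (a - 1)).toNat = 3 := fun a => by ring_nf; rfl
          simp [this]
  have : CompactSpace K := isCompact_iff_compactSpace.1 hK
  -- The probability measures on the compact set `K` form a compact space, so that the normalized
  -- measures converge along the ultrafilter.
  let P : ℕ → ProbabilityMeasure K := fun M => ⟨m₀⁻¹ • μ M, ⟨by
    rw [Measure.smul_apply, hμ, smul_eq_mul, ENNReal.inv_mul_cancel hm₀0 hm₀t]⟩⟩
  obtain ⟨ρ, -, hρ⟩ := isCompact_univ.ultrafilter_le_nhds ((hyperfilter ℕ).map P) (by simp)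
  have hρt : Tendsto P (hyperfilter ℕ : Filter ℕ) (𝓝 ρ) := hρ
  refine ⟨(ρ : Measure K).map Subtype.val,
    Measure.isProbabilityMeasure_map measurable_subtype_coe.aemeasurable, ?_,
    m₀⁻¹ * (3 ^ n * 2 ^ s), ?_, ?_⟩
  · rw [Measure.map_apply measurable_subtype_coe hK.measurableSet.compl]
    simp
  · refine ENNReal.mul_ne_top (ENNReal.inv_ne_top.2 hm₀0) (ENNReal.mul_ne_top ?_ ?_)
    · exact ENNReal.pow_ne_top (by norm_num)
    · exact ENNReal.rpow_ne_top_of_nonneg hs.le (by norm_num)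
  · intro x r hr0 hr1
    obtain ⟨m, hm1, hm2⟩ := exists_nat_pow_near_of_lt_one hr0 hr1
      (by norm_num : (0 : ℝ) < 2⁻¹) (by norm_num : (2⁻¹ : ℝ) < 1)
    rw [Measure.map_apply measurable_subtype_coe measurableSet_ball]
    have hsub' : (Subtype.val ⁻¹' ball x r : Set K) ⊆ Subtype.val ⁻¹' ball x (2 ^ m)⁻¹ := by
      apply preimage_mono
      apply ball_subset_ball
      rwa [← inv_pow]
    refine (measure_mono hsub').trans ?_
    have hop : IsOpen (Subtype.val ⁻¹' ball x (2 ^ m)⁻¹ : Set K) :=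
      isOpen_ball.preimage continuous_subtype_val
    refine (ProbabilityMeasure.le_liminf_measure_open_of_tendsto hρt hop).trans ?_
    have hbound : ∀ᶠ M in (hyperfilter ℕ : Filter ℕ),
        (P M : Measure K) (Subtype.val ⁻¹' ball x (2 ^ m)⁻¹) ≤
          m₀⁻¹ * (3 ^ n * 2 ^ (-(s * m))) := by
      filter_upwards [Nat.hyperfilter_le_atTop (eventually_ge_atTop m)] with M hM
      obtain ⟨d, rfl⟩ := Nat.exists_eq_add_of_le hM
      change (m₀⁻¹ • μ (m + d)) _ ≤ _
      rw [Measure.smul_apply, smul_eq_mul]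
      gcongr
      exact hball m d x
    refine (liminf_le_of_frequently_le' hbound.frequently).trans ?_
    rw [mul_assoc, mul_assoc]
    gcongr
    calc (2 : ℝ≥0∞) ^ (-(s * m)) = 2 ^ s * (ENNReal.ofReal (2⁻¹ ^ (m + 1))) ^ s := by
          rw [ENNReal.ofReal_pow (by norm_num), ENNReal.ofReal_inv_of_pos (by norm_num),
            ← ENNReal.inv_pow, ← ENNReal.rpow_natCast, ← ENNReal.rpow_neg, ENNReal.ofReal_ofNat,
            ← ENNReal.rpow_mul, ← ENNReal.rpow_add _ _ (by norm_num) (by norm_num)]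
          push_cast
          ring_nf
      _ ≤ 2 ^ s * ENNReal.ofReal r ^ s := by gcongr

/-! ### Energies of projections -/

/-- Dyadic domination of the Riesz kernel: at distance about `2⁻ᵐ < 1` the `m`-th term suffices, at
distance at least `1` the constant does, and on the diagonal both sides are infinite. -/
lemma edist_rpow_le_tsum {X : Type*} [MetricSpace X] {t : ℝ} (ht : 0 < t) (x y : X) :
    edist x y ^ (-t) ≤
      1 + ∑' m : ℕ, (2 : ℝ≥0∞) ^ (t * (m + 1)) * (ball x ((2 ^ m)⁻¹)).indicator 1 y := by
  rcases eq_or_ne x y with rfl | hne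
  · have : ∑' m : ℕ, (2 : ℝ≥0∞) ^ (t * (m + 1)) * (ball x ((2 ^ m)⁻¹)).indicator 1 x = ⊤ := by
      rw [← top_le_iff, ← ENNReal.tsum_const_eq_top_of_ne_zero (α := ℕ) one_ne_zero]
      refine ENNReal.tsum_le_tsum fun m => ?_
      rw [indicator_of_mem (mem_ball_self (by positivity)), Pi.one_apply, mul_one]
      exact ENNReal.one_le_rpow (by norm_num) (by positivity)
    rw [this]
    simp
  rcases le_or_gt 1 (dist x y) with h1 | h1
  · refine le_trans ?_ le_self_add
    rw [ENNReal.rpow_neg, ENNReal.inv_le_one]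
    refine ENNReal.one_le_rpow ?_ ht
    rw [edist_dist]
    simpa using ENNReal.ofReal_le_ofReal h1
  · have hd : 0 < dist x y := dist_pos.2 hne
    obtain ⟨m, hm1, hm2⟩ : ∃ m : ℕ, ((2 : ℝ) ^ (m + 1))⁻¹ ≤ dist x y ∧
        dist x y < ((2 : ℝ) ^ m)⁻¹ := by
      have hex : ∃ m : ℕ, ((2 : ℝ) ^ (m + 1))⁻¹ ≤ dist x y := by
        obtain ⟨m, hm⟩ := exists_pow_lt_of_lt_one hd (by norm_num : (2⁻¹ : ℝ) < 1)
        refine ⟨m, le_trans ?_ hm.le⟩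
        rw [← inv_pow]
        exact pow_le_pow_of_le_one (by norm_num) (by norm_num) (Nat.le_succ m)
      classical
      refine ⟨Nat.find hex, Nat.find_spec hex, ?_⟩
      rcases h : Nat.find hex with _ | k
      · simpa using h1
      · exact not_le.1 (Nat.find_min hex (h ▸ Nat.lt_succ_self k))
    refine le_trans ?_ le_add_self
    refine le_trans ?_ (ENNReal.le_tsum m)
    have hmem : y ∈ ball x ((2 ^ m)⁻¹) := by rwa [mem_ball, dist_comm]
    rw [indicator_of_mem hmem, Pi.one_apply, mul_one]
    have h3 : (2 : ℝ≥0∞) ^ (-(m + 1 : ℝ)) ≤ edist x y := by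
      rw [edist_dist]
      refine le_trans ?_ (ENNReal.ofReal_le_ofReal hm1)
      rw [ENNReal.ofReal_inv_of_pos (by positivity), ENNReal.ofReal_pow (by norm_num),
        ENNReal.rpow_neg, ENNReal.ofReal_ofNat, ← ENNReal.rpow_natCast]
      push_cast
      exact le_rfl
    calc edist x y ^ (-t) = (edist x y ^ t)⁻¹ := ENNReal.rpow_neg _ _
      _ ≤ (((2 : ℝ≥0∞) ^ (-(m + 1 : ℝ))) ^ t)⁻¹ := by gcongr
      _ = _ := by
          rw [← ENNReal.rpow_neg, ← ENNReal.rpow_mul]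
          ring_nf

/-- A measure with the `s`-dimensional ball condition has bounded `t`-potential for `t < s`. -/
lemma potential_le {X : Type*} [MetricSpace X] [MeasurableSpace X] [OpensMeasurableSpace X]
    (ν : Measure X) [IsFiniteMeasure ν] {s t : ℝ} (ht : 0 < t) (hts : t < s) {C : ℝ≥0∞}
    (hC : C ≠ ⊤)
    (hν : ∀ x, ∀ r : ℝ, 0 < r → r ≤ 1 → ν (ball x r) ≤ C * ENNReal.ofReal r ^ s) :
    ∃ D : ℝ≥0∞, D ≠ ⊤ ∧ ∀ x, ∫⁻ y, edist x y ^ (-t) ∂ν ≤ D := by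
  set q : ℝ≥0∞ := 2 ^ (t - s) with hq
  have hq1 : q < 1 := by
    rw [hq, ← ENNReal.rpow_zero (x := 2)]
    exact ENNReal.rpow_lt_rpow_of_exponent_lt (by norm_num) (by norm_num) (by linarith)
  refine ⟨ν univ + C * 2 ^ t * (1 - q)⁻¹, ?_, fun x => ?_⟩
  · refine ENNReal.add_ne_top.2 ⟨measure_ne_top _ _, ENNReal.mul_ne_top (ENNReal.mul_ne_top hC
      (ENNReal.rpow_ne_top_of_nonneg ht.le (by norm_num)))
      (ENNReal.inv_ne_top.2 (tsub_pos_of_lt hq1).ne')⟩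
  calc ∫⁻ y, edist x y ^ (-t) ∂ν
      ≤ ∫⁻ y, (1 + ∑' m : ℕ, (2 : ℝ≥0∞) ^ (t * (m + 1)) *
          (ball x ((2 ^ m)⁻¹)).indicator 1 y) ∂ν :=
        lintegral_mono fun y => edist_rpow_le_tsum ht x y
    _ = ν univ + ∑' m : ℕ, (2 : ℝ≥0∞) ^ (t * (m + 1)) * ν (ball x ((2 ^ m)⁻¹)) := by
        rw [lintegral_add_left measurable_const, lintegral_one, lintegral_tsum]
        · congr 2
          ext m
          rw [lintegral_const_mul _ (measurable_one.indicator measurableSet_ball),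
            lintegral_indicator_one measurableSet_ball]
        · exact fun m => ((measurable_one.indicator measurableSet_ball).const_mul _).aemeasurable
    _ ≤ ν univ + ∑' m : ℕ, C * 2 ^ t * q ^ m := by
        refine add_le_add le_rfl (ENNReal.tsum_le_tsum fun m => ?_)
        calc (2 : ℝ≥0∞) ^ (t * (m + 1)) * ν (ball x ((2 ^ m)⁻¹))
            ≤ 2 ^ (t * (m + 1)) * (C * ENNReal.ofReal ((2 ^ m)⁻¹) ^ s) := by
              gcongr
              exact hν x _ (by positivity)
                (inv_le_one_of_one_le₀ (one_le_pow₀ (by norm_num)))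
          _ = C * (2 ^ (t * (m + 1)) * 2 ^ (-(m : ℝ) * s)) := by
              rw [ENNReal.ofReal_inv_of_pos (by positivity), ENNReal.ofReal_pow (by norm_num),
                ENNReal.ofReal_ofNat, ← ENNReal.rpow_natCast, ← ENNReal.rpow_neg,
                ← ENNReal.rpow_mul]
              ring
          _ = C * (2 ^ t * q ^ m) := by
              rw [hq, ← ENNReal.rpow_natCast, ← ENNReal.rpow_mul,
                ← ENNReal.rpow_add _ _ (by norm_num) (by norm_num),
                ← ENNReal.rpow_add _ _ (by norm_num) (by norm_num)]
              ring_nf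
          _ = C * 2 ^ t * q ^ m := (mul_assoc _ _ _).symm
    _ = _ := by rw [ENNReal.tsum_mul_left, ENNReal.tsum_geometric]

/-- Lebesgue measure on the cube `[-R, R]ⁿ`, written as a product of one-dimensional measures. -/
noncomputable def cubeMeasure (n : ℕ) (R : ℝ) : Measure (Fin n → ℝ) :=
  Measure.pi fun _ => (volume : Measure ℝ).restrict (Icc (-R) R)

instance (n : ℕ) (R : ℝ) : IsFiniteMeasure (cubeMeasure n R) := by
  unfold cubeMeasure; infer_instance

/-- The averaged kernel. This is where `t < 1` enters: integrating first in the variable `v j` for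
which `|w j|` is the sup norm of `w`, the integral is a one-dimensional Riesz potential of Lebesgue
measure, scaled by `‖w‖ ^ (-t)`. -/
lemma lintegral_linear_form_le {t : ℝ} (ht : 0 < t) (ht1 : t < 1) (R : ℝ) :
    ∃ D : ℝ≥0∞, D ≠ ⊤ ∧ ∀ w : Fin n → ℝ,
      ∫⁻ v, ‖∑ j, v j * w j‖ₑ ^ (-t) ∂cubeMeasure n R ≤ D * ‖w‖ₑ ^ (-t) := by
  obtain ⟨D₀, hD₀, hpot⟩ := potential_le ((volume : Measure ℝ).restrict (Icc (-R) R)) ht ht1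
    (C := 2) (by norm_num) (fun x r hr _ => by
      refine (Measure.restrict_apply_le _ _).trans ?_
      rw [Real.volume_ball, ENNReal.ofReal_mul (by norm_num)]
      simp)
  rcases n with _ | m
  · refine ⟨1, by simp, fun w => ?_⟩
    have : w = 0 := Subsingleton.elim _ _
    rw [this, enorm_zero, ENNReal.zero_rpow_of_neg (by linarith), one_mul]
    exact le_top
  refine ⟨D₀ * cubeMeasure m R univ + 1, by
    simpa using ENNReal.mul_ne_top hD₀ (measure_ne_top _ _), fun w => ?_⟩
  -- For `w = 0` the right-hand side is infinite, the added `1` making the constant nonzero.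
  rcases eq_or_ne w 0 with rfl | hw
  · simp [ht]
  obtain ⟨j, hj⟩ : ∃ j, ‖w‖ = ‖w j‖ := by
    obtain ⟨j, -, hj⟩ := Finset.exists_max_image Finset.univ (fun j => ‖w j‖) ⟨0, by simp⟩
    exact ⟨j, le_antisymm ((pi_norm_le_iff_of_nonneg (norm_nonneg _)).2 fun i => hj i (by simp))
      (norm_le_pi_norm w j)⟩
  have hje : ‖w‖ₑ = ‖w j‖ₑ := by
    rw [← ofReal_norm, ← ofReal_norm, hj]
  have hwj : w j ≠ 0 := by
    rw [← norm_ne_zero_iff, ← hj]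
    exact norm_ne_zero_iff.2 hw
  have hmp := (measurePreserving_piFinSuccAbove
    (fun _ : Fin (m + 1) => (volume : Measure ℝ).restrict (Icc (-R) R)) j).symm
  have hmeas : Measurable fun v : Fin (m + 1) → ℝ => ‖∑ j, v j * w j‖ₑ ^ (-t) := by fun_prop
  unfold cubeMeasure
  rw [← hmp.lintegral_comp hmeas]
  refine (lintegral_prod_symm _
    (hmeas.comp (MeasurableEquiv.measurable _)).aemeasurable).trans_le ?_
  have hinner : ∀ u : Fin m → ℝ,
      ∫⁻ a, ‖∑ k, ((MeasurableEquiv.piFinSuccAbove (fun _ => ℝ) j).symm (a, u)) k * w k‖ₑ ^ (-t)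
        ∂(volume : Measure ℝ).restrict (Icc (-R) R) ≤ ‖w‖ₑ ^ (-t) * D₀ := by
    intro u
    set b : ℝ := ∑ k, u k * w (j.succAbove k) with hb
    have h1 : ∀ a : ℝ,
        ‖∑ k, ((MeasurableEquiv.piFinSuccAbove (fun _ => ℝ) j).symm (a, u)) k * w k‖ₑ ^ (-t) =
          ‖w‖ₑ ^ (-t) * edist (-(b / w j)) a ^ (-t) := by
      intro a
      rw [Fin.sum_univ_succAbove _ j]
      have h2 : a * w j + b = w j * (a - -(b / w j)) := by field_simp; ring
      simp only [MeasurableEquiv.piFinSuccAbove_symm_apply, Fin.insertNthEquiv_apply,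
        Fin.insertNth_apply_same, Fin.insertNth_apply_succAbove]
      rw [← hb, h2, enorm_mul, ← hje, edist_comm, edist_eq_enorm_sub,
        ENNReal.mul_rpow_of_ne_top (by simp) (by simp)]
    simp_rw [h1]
    rw [lintegral_const_mul _ (by fun_prop)]
    gcongr
    exact hpot _
  refine (lintegral_mono hinner).trans ?_
  rw [lintegral_const]
  calc ‖w‖ₑ ^ (-t) * D₀ * _ = D₀ * cubeMeasure m R univ * ‖w‖ₑ ^ (-t) := by
        unfold cubeMeasure; ring
    _ ≤ _ := by gcongr; exact le_self_add

/-- By Fubini and `lintegral_linear_form_le`, the average over `v` of the `t`-energies of the images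
of `ν` under `x ↦ ∑ j, v j * x j` is bounded by a multiple of the `t`-energy of `ν`, which is finite
by the ball condition. -/
lemma ae_energy_lt_top (ν : Measure (Fin n → ℝ)) [IsFiniteMeasure ν] {s t : ℝ} (ht : 0 < t)
    (hts : t < s) (ht1 : t < 1) {C : ℝ≥0∞} (hC : C ≠ ⊤)
    (hν : ∀ x, ∀ r : ℝ, 0 < r → r ≤ 1 → ν (ball x r) ≤ C * ENNReal.ofReal r ^ s) :
    ∀ᵐ v : Fin n → ℝ, ∫⁻ x, ∫⁻ y,
      edist (∑ j, v j * x j) (∑ j, v j * y j) ^ (-t) ∂ν ∂ν < ⊤ := by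
  obtain ⟨D, hD, hpot⟩ := potential_le ν ht hts hC hν
  have hcube : ∀ R : ℕ, ∀ᵐ v ∂cubeMeasure n R, ∫⁻ x, ∫⁻ y,
      edist (∑ j, v j * x j) (∑ j, v j * y j) ^ (-t) ∂ν ∂ν < ⊤ := by
    intro R
    obtain ⟨D', hD', hlin⟩ := lintegral_linear_form_le (n := n) ht ht1 R
    let F : (Fin n → ℝ) → (Fin n → ℝ) × (Fin n → ℝ) → ℝ≥0∞ := fun v z =>
      edist (∑ j, v j * z.1 j) (∑ j, v j * z.2 j) ^ (-t)
    have hF : Measurable (Function.uncurry F) := by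
      simp only [F, Function.uncurry_def]
      fun_prop
    have hprod : ∀ v, ∫⁻ x, ∫⁻ y,
        edist (∑ j, v j * x j) (∑ j, v j * y j) ^ (-t) ∂ν ∂ν = ∫⁻ z, F v z ∂(ν.prod ν) := by
      intro v
      exact (lintegral_prod (F v) (hF.comp measurable_prodMk_left).aemeasurable).symm
    simp_rw [hprod]
    refine ae_lt_top hF.lintegral_prod_right' (ne_top_of_le_ne_top
      (b := D' * (D * ν univ)) (ENNReal.mul_ne_top hD' (ENNReal.mul_ne_top hD
        (measure_ne_top _ _))) ?_)
    change ∫⁻ v, ∫⁻ z, F v z ∂(ν.prod ν) ∂cubeMeasure n R ≤ _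
    rw [lintegral_lintegral_swap hF.aemeasurable]
    have hz : ∀ z : (Fin n → ℝ) × (Fin n → ℝ),
        ∫⁻ v, F v z ∂cubeMeasure n R ≤ D' * edist z.1 z.2 ^ (-t) := by
      intro z
      rw [edist_eq_enorm_sub]
      refine le_trans (le_of_eq ?_) (hlin (z.1 - z.2))
      congr 1
      ext v
      simp only [F, edist_eq_enorm_sub]
      rw [← Finset.sum_sub_distrib]
      simp [mul_sub]
    refine (lintegral_mono hz).trans ?_
    rw [lintegral_const_mul _ (by fun_prop), lintegral_prod _ (by fun_prop)]
    gcongr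
    refine (lintegral_mono hpot).trans ?_
    rw [lintegral_const]
  have hU : (volume : Measure (Fin n → ℝ)) =
      volume.restrict (⋃ R : ℕ, Set.univ.pi fun _ => Icc (-(R : ℝ)) R) := by
    rw [eq_comm]
    convert Measure.restrict_univ
    refine eq_univ_of_forall fun x => ?_
    obtain ⟨R, hR⟩ := exists_nat_ge ‖x‖
    exact mem_iUnion.2 ⟨R, fun j _ => abs_le.1 ((norm_le_pi_norm x j).trans hR)⟩
  rw [hU, ae_restrict_iUnion_iff]
  intro R
  rw [volume_pi, Measure.restrict_pi_pi]
  exact hcube R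

/-- The energy method. The restriction of `ν` to a set where the potential is bounded by `M` has an
image `ρ` with `ρ T ≤ (M + 1) * (diam T) ^ t` for all small `T`, so that `ρ` is dominated by a
multiple of the `t`-dimensional Hausdorff measure. -/
lemma le_dimH_image_of_energy {X : Type*} [TopologicalSpace X] [MeasurableSpace X] [BorelSpace X]
    {ν : Measure X} [IsProbabilityMeasure ν] {K : Set X} (hK : IsCompact K) (hνK : ν Kᶜ = 0)
    {f : X → ℝ} (hf : Continuous f) {t : ℝ≥0} (ht : 0 < t)
    (hE : ∫⁻ x, ∫⁻ y, edist (f x) (f y) ^ (-(t : ℝ)) ∂ν ∂ν < ⊤) :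
    (t : ℝ≥0∞) ≤ dimH (f '' K) := by
  have ht' : (0 : ℝ) < t := by exact_mod_cast ht
  have hfm : Measurable f := hf.measurable
  set U : X → ℝ≥0∞ := fun x => ∫⁻ y, edist (f x) (f y) ^ (-(t : ℝ)) ∂ν with hU
  have hUm : Measurable U := by
    apply Measurable.lintegral_prod_right'
      (f := fun z : X × X => edist (f z.1) (f z.2) ^ (-(t : ℝ)))
    fun_prop
  have hUfin : ∀ᵐ x ∂ν, U x < ⊤ := ae_lt_top hUm hE.ne
  -- The potential is almost everywhere finite, hence bounded on a set of positive measure.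
  obtain ⟨M, hM⟩ : ∃ M : ℕ, ν {x | U x ≤ M} ≠ 0 := by
    by_contra! hcon
    have h0 : ν (⋃ M : ℕ, {x | U x ≤ M}) = 0 := measure_iUnion_null hcon
    have h1 : ∀ᵐ x ∂ν, x ∉ ⋃ M : ℕ, {x | U x ≤ M} := measure_eq_zero_iff_ae_notMem.1 h0
    obtain ⟨x, hx1, hx2⟩ := (hUfin.and h1).exists
    obtain ⟨M, hM⟩ := ENNReal.exists_nat_gt hx1.ne
    exact hx2 (mem_iUnion.2 ⟨M, hM.le⟩)
  set G : Set X := {x | U x ≤ M} with hG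
  have hGm : MeasurableSet G := measurableSet_le hUm measurable_const
  let ρ : Measure ℝ := (ν.restrict G).map f
  have hclosed : ∀ T : Set ℝ, IsClosed T → ediam T ≤ 1 →
      ρ T ≤ (M + 1 : ℝ≥0∞) * ediam T ^ (t : ℝ) := by
    intro T hT hT1
    rw [Measure.map_apply hfm hT.measurableSet,
      Measure.restrict_apply (hfm hT.measurableSet)]
    rcases (f ⁻¹' T ∩ G).eq_empty_or_nonempty with h0 | ⟨x, hxT, hxG⟩
    · simp [h0]
    refine (measure_mono inter_subset_left).trans ?_
    rw [← ENNReal.div_le_iff_le_mul (Or.inr (by simp)) (Or.inr (by simp))]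
    calc ν (f ⁻¹' T) / ediam T ^ (t : ℝ)
        = ∫⁻ y in f ⁻¹' T, ediam T ^ (-(t : ℝ)) ∂ν := by
          rw [setLIntegral_const, ENNReal.rpow_neg, div_eq_mul_inv, mul_comm]
      _ ≤ ∫⁻ y in f ⁻¹' T, edist (f x) (f y) ^ (-(t : ℝ)) ∂ν := by
          refine setLIntegral_mono' (hfm hT.measurableSet) fun y hy => ?_
          rw [ENNReal.rpow_neg, ENNReal.rpow_neg]
          gcongr
          exact edist_le_ediam_of_mem hxT hy
      _ ≤ U x := setLIntegral_le_lintegral _ _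
      _ ≤ M := hxG
      _ ≤ M + 1 := le_self_add
  have hle : (M + 1 : ℝ≥0∞)⁻¹ • ρ ≤ μH[t] := by
    refine Measure.le_hausdorffMeasure _ _ 1 one_pos fun T hT => ?_
    have h1 := hclosed (closure T) isClosed_closure (by rwa [ediam_closure])
    rw [ediam_closure] at h1
    rw [Measure.smul_apply, smul_eq_mul]
    calc (M + 1 : ℝ≥0∞)⁻¹ * ρ T
        ≤ (M + 1 : ℝ≥0∞)⁻¹ * ((M + 1 : ℝ≥0∞) * ediam T ^ (t : ℝ)) := by
          gcongr
          exact (measure_mono subset_closure).trans h1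
      _ = ediam T ^ (t : ℝ) := by
          rw [← mul_assoc, ENNReal.inv_mul_cancel (by simp) (by simp), one_mul]
  refine le_dimH_of_hausdorffMeasure_ne_zero fun h0 => ?_
  have h1 : (M + 1 : ℝ≥0∞)⁻¹ * ρ (f '' K) ≤ 0 := by
    rw [← h0]; exact hle _
  have h2 : ρ (f '' K) = 0 := by
    have := le_antisymm h1 zero_le
    rw [mul_eq_zero] at this
    exact this.resolve_left (by simp)
  refine hM (le_antisymm ?_ zero_le)
  rw [← h2]
  change _ ≤ (ν.restrict G).map f (f '' K)
  rw [Measure.map_apply hfm (hK.image hf).measurableSet,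
    Measure.restrict_apply (hfm (hK.image hf).measurableSet)]
  calc ν G ≤ ν ((f ⁻¹' (f '' K) ∩ G) ∪ Kᶜ) := by
        refine measure_mono fun x hx => ?_
        by_cases hxK : x ∈ K
        · exact Or.inl ⟨⟨x, hxK, rfl⟩, hx⟩
        · exact Or.inr hxK
    _ ≤ _ := (measure_union_le _ _).trans (by rw [hνK, add_zero])

/-! ### Almost every linear form -/

/-- With `t < s < s' < dimH A`, Frostman's lemma for the exponent `s` applies to a compact subset of
a bounded part of `A` of positive `s'`-content. Here `dimH A ≤ 1` is used to get `t < 1`. -/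
lemma ae_le_dimH_of_lt {A : Set (Fin n → ℝ)} (hA : MeasurableSet A) (hdim : dimH A ≤ 1)
    {t : ℝ≥0} (ht : 0 < t) (htA : (t : ℝ≥0∞) < dimH A) :
    ∀ᵐ v : Fin n → ℝ, (t : ℝ≥0∞) ≤ dimH ((fun x : Fin n → ℝ => ∑ j, v j * x j) '' A) := by
  obtain ⟨s', hts', hs'A⟩ := ENNReal.lt_iff_exists_nnreal_btwn.1 htA
  have hts' : t < s' := by exact_mod_cast hts'
  obtain ⟨s, hts, hss'⟩ := exists_between hts'
  have ht1 : t < 1 := by exact_mod_cast htA.trans_le hdim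
  have hU : A = ⋃ N : ℕ, A ∩ ball 0 N := by
    rw [← inter_iUnion, iUnion_ball_nat, inter_univ]
  obtain ⟨N, hN⟩ : ∃ N : ℕ, (s' : ℝ≥0∞) < dimH (A ∩ ball 0 N) := by
    rw [hU, dimH_iUnion] at hs'A
    exact lt_iSup_iff.1 hs'A
  have hpos : 0 < content s' (A ∩ ball 0 N) := by
    refine pos_iff_ne_zero.2 fun h0 => ?_
    have h1 := hausdorffMeasure_eq_zero_of_content_eq_zero
      (NNReal.coe_pos.2 (ht.trans hts')) h0
    rw [hausdorffMeasure_of_lt_dimH hN] at h1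
    exact ENNReal.top_ne_zero h1
  obtain ⟨K, hKA, hK, hKpos⟩ := exists_compact_subset (NNReal.coe_lt_coe.2 hss')
    (isBounded_ball.subset inter_subset_right)
    (hA.inter measurableSet_ball).analyticSet hpos
  obtain ⟨ν, hν, hνK, C, hC, hball⟩ := frostman (NNReal.coe_pos.2 (ht.trans hts)) hK hKpos
  filter_upwards [ae_energy_lt_top ν (NNReal.coe_pos.2 ht) (NNReal.coe_lt_coe.2 hts)
    (by exact_mod_cast ht1) hC hball] with v hv
  exact (le_dimH_image_of_energy hK hνK (by fun_prop) ht hv).trans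
    (dimH_mono (image_mono (hKA.trans inter_subset_left)))

lemma ae_dimH_le {A : Set (Fin n → ℝ)} (hA : MeasurableSet A) (hdim : dimH A ≤ 1) :
    ∀ᵐ v : Fin n → ℝ, dimH A ≤ dimH ((fun x : Fin n → ℝ => ∑ j, v j * x j) '' A) := by
  have h : ∀ᵐ v : Fin n → ℝ, ∀ q : ℚ, ((Real.toNNReal q : ℝ≥0) : ℝ≥0∞) < dimH A →
      ((Real.toNNReal q : ℝ≥0) : ℝ≥0∞) ≤ dimH ((fun x : Fin n → ℝ => ∑ j, v j * x j) '' A) := by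
    refine ae_all_iff.2 fun q => ?_
    by_cases hq : ((Real.toNNReal q : ℝ≥0) : ℝ≥0∞) < dimH A
    · rcases eq_or_ne (Real.toNNReal q) 0 with h0 | h0
      · simp [h0]
      · filter_upwards [ae_le_dimH_of_lt hA hdim (pos_iff_ne_zero.2 h0) hq] with v hv _ using hv
    · exact Eventually.of_forall fun v h => absurd h hq
  filter_upwards [h] with v hv
  refine le_of_forall_lt fun c hc => ?_
  obtain ⟨q, -, hcq, hqA⟩ := ENNReal.lt_iff_exists_rat_btwn.1 hc
  exact hcq.trans_le (hv q hqA)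

/-! ### From linear forms to unit vectors -/

lemma dist_normalize_le {E : Type*} [NormedAddCommGroup E] [NormedSpace ℝ E] {δ : ℝ} (hδ : 0 < δ)
    {x y : E} (hx : δ ≤ ‖x‖) (hy : δ ≤ ‖y‖) :
    dist (‖x‖⁻¹ • x) (‖y‖⁻¹ • y) ≤ 2 / δ * dist x y := by
  have hx0 : 0 < ‖x‖ := hδ.trans_le hx
  have hy0 : 0 < ‖y‖ := hδ.trans_le hy
  have hdec : ‖x‖⁻¹ • x - ‖y‖⁻¹ • y =
      ‖x‖⁻¹ • ((x - y) + ((‖y‖ - ‖x‖) * ‖y‖⁻¹) • y) := by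
    have h1 : ‖x‖⁻¹ * ((‖y‖ - ‖x‖) * ‖y‖⁻¹) = ‖x‖⁻¹ - ‖y‖⁻¹ := by field_simp
    rw [smul_add, smul_smul, h1, smul_sub, sub_smul]
    abel
  have h2 : ‖((‖y‖ - ‖x‖) * ‖y‖⁻¹) • y‖ ≤ ‖x - y‖ := by
    rw [norm_smul, norm_mul, norm_inv, norm_norm, mul_assoc, inv_mul_cancel₀ hy0.ne', mul_one,
      norm_sub_rev x y]
    exact abs_norm_sub_norm_le y x
  rw [dist_eq_norm, dist_eq_norm, hdec, norm_smul, norm_inv, norm_norm]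
  calc ‖x‖⁻¹ * ‖(x - y) + ((‖y‖ - ‖x‖) * ‖y‖⁻¹) • y‖
      ≤ δ⁻¹ * (‖x - y‖ + ‖x - y‖) := by
        gcongr
        exact (norm_add_le _ _).trans (by gcongr)
    _ = 2 / δ * ‖x - y‖ := by ring

/-- The central projection to the sphere of the hyperplane `x i = a`, in the coordinates other
than the `i`-th, followed by multiplication by `ε`. -/
noncomputable def chart {m : ℕ} (i : Fin (m + 1)) (a : ℝ) (ε : ℤ) (u : Fin m → ℝ) :
    EuclideanSpace ℝ (Fin (m + 1)) :=
  (ε : ℝ) • ‖WithLp.toLp 2 (i.insertNth a u : Fin (m + 1) → ℝ)‖⁻¹ •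
    WithLp.toLp 2 (i.insertNth a u : Fin (m + 1) → ℝ)

lemma chart_lipschitz {m : ℕ} (i : Fin (m + 1)) {a : ℝ} (ha : a ≠ 0) (ε : ℤ) :
    ∃ C, LipschitzWith C (chart i a ε) := by
  have h1 : ∀ u : Fin m → ℝ, |a| ≤ ‖WithLp.toLp 2 (i.insertNth a u : Fin (m + 1) → ℝ)‖ := by
    intro u
    simpa using PiLp.norm_apply_le (WithLp.toLp 2 (i.insertNth a u : Fin (m + 1) → ℝ)) i
  obtain ⟨C, hC⟩ : ∃ C, LipschitzWith C
      (WithLp.toLp 2 : (Fin (m + 1) → ℝ) → EuclideanSpace ℝ (Fin (m + 1))) :=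
    ⟨_, PiLp.lipschitzWith_toLp 2 _⟩
  refine ⟨_, LipschitzWith.of_dist_le' (K := |(ε : ℝ)| * (2 / |a| * C)) fun u u' => ?_⟩
  rw [chart, chart, dist_smul₀, Real.norm_eq_abs, mul_assoc, mul_assoc]
  gcongr
  refine (dist_normalize_le (abs_pos.2 ha) (h1 u) (h1 u')).trans ?_
  gcongr
  refine (hC.dist_le_mul _ _).trans ?_
  rw [Fin.dist_insertNth_insertNth, dist_self, max_eq_right dist_nonneg]

/-- A Lebesgue null cone in `ℝ^(m+1)` meets the unit sphere in an `m`-dimensional null set. By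
Fubini, for each `i` some hyperplane `x i = a` with `a ≠ 0` meets the cone in a null set. The central
projections of these sections to the sphere, and their opposites, cover the set in question, and
central projection is Lipschitz on such a hyperplane. -/
lemma hausdorffMeasure_sphere_inter_cone {m : ℕ} {B : Set (Fin (m + 1) → ℝ)} (hB : volume B = 0)
    (hcone : ∀ v ∈ B, ∀ c : ℝ, c ≠ 0 → c • v ∈ B) :
    μH[(m : ℝ)] {e : EuclideanSpace ℝ (Fin (m + 1)) | ‖e‖ = 1 ∧ WithLp.ofLp e ∈ B} = 0 := by
  have hslice : ∀ i : Fin (m + 1), ∃ a : ℝ, a ≠ 0 ∧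
      volume {u : Fin m → ℝ | (i.insertNth a u : Fin (m + 1) → ℝ) ∈ B} = 0 := by
    intro i
    have h1 : ∀ᵐ v : Fin (m + 1) → ℝ, v ∉ B := measure_eq_zero_iff_ae_notMem.1 hB
    have h2 := (volume_preserving_piFinSuccAbove (fun _ => ℝ) i).symm.quasiMeasurePreserving.ae h1
    have h3 := Measure.ae_ae_of_ae_prod h2
    have h4 : ∀ᵐ a : ℝ, a ≠ 0 := by simp [ae_iff]
    obtain ⟨a, ha, ha0⟩ := (h3.and h4).exists
    exact ⟨a, ha0, measure_eq_zero_iff_ae_notMem.2 ha⟩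
  choose a ha0 ha using hslice
  have hnull : μH[(m : ℝ)] (⋃ i : Fin (m + 1), ⋃ ε : ℤ,
      chart i (a i) ε '' {u : Fin m → ℝ | (i.insertNth (a i) u : Fin (m + 1) → ℝ) ∈ B}) = 0 := by
    refine measure_iUnion_null fun i => measure_iUnion_null fun ε => ?_
    obtain ⟨C, hC⟩ := chart_lipschitz i (ha0 i) ε
    refine le_antisymm ((hC.hausdorffMeasure_image_le (Nat.cast_nonneg m) _).trans ?_) zero_le
    have h5 : (μH[(m : ℝ)] : Measure (Fin m → ℝ)) = volume := by
      have := hausdorffMeasure_pi_real (ι := Fin m)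
      rwa [Fintype.card_fin] at this
    rw [h5, ha i, mul_zero]
  refine measure_mono_null ?_ hnull
  rintro e ⟨he, heB⟩
  obtain ⟨i, hi⟩ : ∃ i, e i ≠ 0 := by
    by_contra! hcon
    have : e = 0 := by ext i; exact hcon i
    simp [this] at he
  -- Up to sign, `e` is the normalization of the point `c • e` of the hyperplane `x i = a i`.
  set c : ℝ := a i / e i with hc
  have hc0 : c ≠ 0 := div_ne_zero (ha0 i) hi
  have hins : (i.insertNth (a i) fun j => c * e (i.succAbove j) : Fin (m + 1) → ℝ) =
      c • WithLp.ofLp e := by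
    rw [Fin.insertNth_eq_iff]
    constructor
    · simp [hc, hi]
    · ext j; simp [Fin.removeNth]
  refine mem_iUnion.2 ⟨i, mem_iUnion.2 ⟨SignType.sign c, fun j => c * e (i.succAbove j), ?_, ?_⟩⟩
  · change (i.insertNth (a i) fun j => c * e (i.succAbove j) : Fin (m + 1) → ℝ) ∈ B
    rw [hins]
    exact hcone _ heB c hc0
  · rw [chart, hins, WithLp.toLp_smul, WithLp.toLp_ofLp, norm_smul, he, mul_one, smul_smul,
      smul_smul]
    rcases hc0.lt_or_gt with h | h
    · simp [sign_neg h, abs_of_neg h, hc0]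
    · simp [sign_pos h, abs_of_pos h, hc0]

/-- The vectors `v` for which the dimension drops form a cone, since the images of `A` under `v` and
`c • v` differ by a dilation; it is Lebesgue null by `ae_dimH_le`. -/
lemma ae_sphere_dimH_le {m : ℕ} {A : Set (EuclideanSpace ℝ (Fin (m + 1)))} (hA : MeasurableSet A)
    (hdim : dimH A ≤ 1) :
    ∀ᵐ e ∂((μH[(m : ℝ)] : Measure (EuclideanSpace ℝ (Fin (m + 1)))).restrict (sphere 0 1)),
      dimH A ≤ dimH ((fun x => ⟪e, x⟫) '' A) := by
  let L := EuclideanSpace.equiv (Fin (m + 1)) ℝ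
  have hL : ∀ v : Fin (m + 1) → ℝ, (fun x : Fin (m + 1) → ℝ => ∑ j, v j * x j) '' (L '' A) =
      (fun x => ⟪WithLp.toLp 2 v, x⟫) '' A := by
    intro v
    rw [image_image]
    refine image_congr fun x _ => ?_
    simp [L, PiLp.inner_apply, mul_comm]
  have hmeas : MeasurableSet (L '' A) :=
    L.toHomeomorph.toMeasurableEquiv.measurableSet_image.2 hA
  have hae := ae_dimH_le hmeas (by rwa [L.dimH_image])
  simp only [hL, L.dimH_image] at hae
  have hnull := hausdorffMeasure_sphere_inter_cone hae ?_
  · rw [ae_restrict_iff' isClosed_sphere.measurableSet, ae_iff]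
    refine measure_mono_null (fun e he => ?_) hnull
    simp only [mem_ofPred_eq, Classical.not_imp] at he
    exact ⟨by simpa using he.1, he.2⟩
  · intro v hv c hc hcv
    simp only [mem_ofPred_eq] at hcv hv
    refine hv (le_trans hcv ?_)
    have : (fun x => ⟪WithLp.toLp 2 (c • v), x⟫) '' A =
        (fun r : ℝ => c * r) '' ((fun x => ⟪WithLp.toLp 2 v, x⟫) '' A) := by
      rw [image_image]
      refine image_congr fun x _ => ?_
      rw [WithLp.toLp_smul, real_inner_smul_left]
    rw [this]
    exact (lipschitzWith_smul c).dimH_image_le _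

end Marstrand

/-- Marstrand's projection theorem, part (1): if `A ⊆ ℝⁿ` is a Borel set with
`dim A ≤ 1`, then for surface-measure almost every unit vector `e ∈ S^{n-1}`,
the projection `P_e(A) = {e·x : x ∈ A}` has Hausdorff dimension equal to `dim A`. -/
theorem marstrand_projection_dim_eq (n : ℕ) (hn : 2 ≤ n)
    (A : Set (EuclideanSpace ℝ (Fin n))) (hA : MeasurableSet A)
    (hdim : dimH A ≤ 1) :
    ∀ᵐ e ∂((μH[(n : ℝ) - 1] :
        Measure (EuclideanSpace ℝ (Fin n))).restrict (sphere 0 1)),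
      dimH ((fun x => ⟪e, x⟫) '' A) = dimH A := by
  obtain ⟨m, rfl⟩ : ∃ m, n = m + 1 := ⟨n - 1, by omega⟩
  rw [Nat.cast_add, Nat.cast_one, add_sub_cancel_right]
  filter_upwards [Marstrand.ae_sphere_dimH_le hA hdim] with e he
  exact le_antisymm ((innerSL ℝ e).lipschitz.dimH_image_le A) he
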